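/- For every natural number n, Σ_{a=0}^{n} ( Σ_{i=0}^{a} Σ_{k=0}^{i−1} C(n−a, k+2) + a(n−a) ) = F(n+6) − (n² + 4n + 8), where C denotes the binomial coefficient. -/

import Mathlib

def QQ (i m : ℕ) : ℕ := ∑ k ∈ Finset.range i, Nat.choose m (k + 2)

def TT (a m : ℕ) : ℕ := (∑ i ∈ Finset.range (a + 1), QQ i m) + a * m

lemma QQ_succ (i m : ℕ) : QQ (i + 1) m = QQ i m + Nat.choose m (i + 2) := by
  simp [QQ, Finset.sum_range_succ]

lemma QQ_rec (i m : ℕ) : QQ (i + 1) (m + 1) = QQ (i + 1) m + QQ i m + m := by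
  induction i with
  | zero => simp [QQ, Nat.choose_succ_succ' m 1]; omega
  | succ i ih =>
    rw [QQ_succ (i + 1) (m + 1), ih, QQ_succ (i + 1) m, QQ_succ i m,
      Nat.choose_succ_succ' m (i + 2)]
    ring

lemma TT_succ (a m : ℕ) : TT (a + 1) m = TT a m + QQ (a + 1) m + m := by
  simp only [TT]
  rw [Finset.sum_range_succ _ (a + 1)]
  ring

lemma TT_zero (m : ℕ) : TT 0 m = 0 := by simp [TT, QQ]

lemma TT_zero_right (a : ℕ) : TT a 0 = 0 := by simp [TT, QQ]

lemma TT_rec (a m : ℕ) : TT (a + 1) (m + 1) = TT (a + 1) m + TT a m + (a + m + 1) := by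
  induction a with
  | zero =>
    have h := QQ_rec 0 m
    have h0 : QQ 0 m = 0 := by simp [QQ]
    rw [TT_succ, TT_succ, TT_zero, TT_zero]
    omega
  | succ a ih =>
    rw [TT_succ (a + 1) (m + 1), ih, QQ_rec, TT_succ (a + 1) m]
    have := TT_succ a m
    omega

def UU (n : ℕ) : ℕ := ∑ p ∈ Finset.HasAntidiagonal.antidiagonal n, TT p.1 p.2

lemma UU_rec (n : ℕ) : UU (n + 2) = UU (n + 1) + UU n + (n + 1) ^ 2 := by
  have h1 : UU (n + 1) = ∑ p ∈ Finset.HasAntidiagonal.antidiagonal n, TT (p.1 + 1) p.2 := by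
    rw [UU, Finset.Nat.sum_antidiagonal_succ]
    simp [TT_zero]
  have h2 : UU (n + 2) = ∑ p ∈ Finset.HasAntidiagonal.antidiagonal n, TT (p.1 + 1) (p.2 + 1) := by
    rw [UU, Finset.Nat.sum_antidiagonal_succ, Finset.Nat.sum_antidiagonal_succ']
    simp [TT_zero, TT_zero_right]
  have h3 : ∑ p ∈ Finset.HasAntidiagonal.antidiagonal n, (p.1 + p.2 + 1) = (n + 1) ^ 2 := by
    rw [Finset.sum_congr rfl (g := fun _ => n + 1)]
    · simp [sq]
    · intro p hp
      rw [Finset.HasAntidiagonal.mem_antidiagonal.mp hp]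
  rw [h2, h1, ← h3, UU, ← Finset.sum_add_distrib, ← Finset.sum_add_distrib]
  exact Finset.sum_congr rfl fun p _ => TT_rec p.1 p.2

lemma UU_fib (n : ℕ) : UU n + (n ^ 2 + 4 * n + 8) = Nat.fib (n + 6) := by
  induction n using Nat.twoStepInduction with
  | zero => decide
  | one => decide
  | more n h1 h2 =>
    have h : Nat.fib (n + 2 + 6) = Nat.fib (n + 6) + Nat.fib (n + 1 + 6) := Nat.fib_add_two
    rw [h, ← h1, ← h2, UU_rec]
    ring

/-- `∑_{a=0}^{n} ( ∑_{i=0}^{a} ∑_{k=0}^{i-1} C(n-a, k+2) + a(n-a) )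
      = F(n+6) - (n² + 4n + 8)`. -/
theorem sum_G_formula_eq_fib (n : ℕ) :
    ∑ a ∈ Finset.range (n + 1),
        ((∑ i ∈ Finset.range (a + 1), ∑ k ∈ Finset.range i,
            Nat.choose (n - a) (k + 2)) + a * (n - a)) =
      Nat.fib (n + 6) - (n ^ 2 + 4 * n + 8) := by
  rw [← UU_fib, Nat.add_sub_cancel, UU,
    Finset.Nat.sum_antidiagonal_eq_sum_range_succ_mk]
  rfl
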